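/- For every constant vector η = (η₁, η₂, η₃) ∈ ℝ³ and every μ ∈ [0,1], the function w^η(ξ) := (η₁ξ₁ + η₂ξ₂ + η₃)/√(1 + |ξ|²) satisfies 𝒩_μ w^η(ξ) = 0 at every point ξ ∈ ℝ²; i.e. w^η is an exact global solution of the equation 𝒩_μ w = 0. -/

import Mathlib

open Real Set

/-- Partial derivative in the first conical coordinate. -/
noncomputable def pd1 (f : ℝ × ℝ → ℝ) (x : ℝ × ℝ) : ℝ := fderiv ℝ f x (1, 0)

/-- Partial derivative in the second conical coordinate. -/
noncomputable def pd2 (f : ℝ × ℝ → ℝ) (x : ℝ × ℝ) : ℝ := fderiv ℝ f x (0, 1)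

/-- `D²f[a,b] = Σ_{i,j} a_i b_j ∂_{ij} f` evaluated at `x`. -/
noncomputable def D2 (f : ℝ × ℝ → ℝ) (a b x : ℝ × ℝ) : ℝ :=
    a.1 * b.1 * pd1 (pd1 f) x + a.1 * b.2 * pd1 (pd2 f) x
  + a.2 * b.1 * pd2 (pd1 f) x + a.2 * b.2 * pd2 (pd2 f) x

/-- The gradient `Df` as a vector of `ℝ × ℝ`. -/
noncomputable def gradv (f : ℝ × ℝ → ℝ) (x : ℝ × ℝ) : ℝ × ℝ := (pd1 f x, pd2 f x)

/-- `Df · ξ` at `x = ξ`. -/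
noncomputable def dotxi (f : ℝ × ℝ → ℝ) (x : ℝ × ℝ) : ℝ := pd1 f x * x.1 + pd2 f x * x.2

/-- `χ = ψ − Dψ·ξ`. -/
noncomputable def chiF (ψ : ℝ × ℝ → ℝ) (x : ℝ × ℝ) : ℝ := ψ x - dotxi ψ x

/-- The squared scaled sound speed `a² = |Dψ|² + χ² − 1`. -/
noncomputable def sqSound (ψ : ℝ × ℝ → ℝ) (x : ℝ × ℝ) : ℝ :=
  (pd1 ψ x) ^ 2 + (pd2 ψ x) ^ 2 + (chiF ψ x) ^ 2 - 1

/-- `ℱ(μ,ψ) = a²(Δψ + D²ψ[ξ,ξ]) − μ D²ψ[Dψ − χξ, Dψ − χξ]`;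
`μ = 1` is the conical Chaplygin potential equation. -/
noncomputable def Fop (μ : ℝ) (ψ : ℝ × ℝ → ℝ) (x : ℝ × ℝ) : ℝ :=
  sqSound ψ x * (pd1 (pd1 ψ) x + pd2 (pd2 ψ) x + D2 ψ x x x)
    - μ * D2 ψ (gradv ψ x - chiF ψ x • x) (gradv ψ x - chiF ψ x • x) x

/-- `b²(w) = w² − 1 + (1+|ξ|²)(|Dw|² + (Dw·ξ)²)`. -/
noncomputable def b2 (w : ℝ × ℝ → ℝ) (x : ℝ × ℝ) : ℝ :=
  (w x) ^ 2 - 1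
    + (1 + x.1 ^ 2 + x.2 ^ 2) * ((pd1 w x) ^ 2 + (pd2 w x) ^ 2 + (dotxi w x) ^ 2)

/-- The operator `𝒩_μ`. -/
noncomputable def Nop (μ : ℝ) (w : ℝ × ℝ → ℝ) (x : ℝ × ℝ) : ℝ :=
  b2 w x * (pd1 (pd1 w) x + pd2 (pd2 w) x + D2 w x x x)
    - μ * (1 + x.1 ^ 2 + x.2 ^ 2) *
        D2 w (gradv w x + dotxi w x • x) (gradv w x + dotxi w x • x) x
    + 2 * ((1 - μ) * b2 w x + μ * ((w x) ^ 2 - 1)) * dotxi w x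
    + ((2 - μ) * b2 w x + μ * ((w x) ^ 2 - 1)) * w x / (1 + x.1 ^ 2 + x.2 ^ 2)

/-- Local uniform ellipticity of `𝒩_μ` with respect to `w` on `Ω`: on each compact
subset the principal-part matrix `b²(w)(I₂+ξξᵀ) − μ(1+|ξ|²)qqᵀ`, `q = Dw + (Dw·ξ)ξ`,
has eigenvalues bounded below by a positive constant. -/
def LocUnifElliptic (μ : ℝ) (w : ℝ × ℝ → ℝ) (Ω : Set (ℝ × ℝ)) : Prop :=
  ∀ K : Set (ℝ × ℝ), K ⊆ Ω → IsCompact K → ∃ lam : ℝ, 0 < lam ∧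
    ∀ x ∈ K, ∀ v : ℝ × ℝ,
      lam * (v.1 ^ 2 + v.2 ^ 2) ≤
        b2 w x * (v.1 ^ 2 + v.2 ^ 2 + (x.1 * v.1 + x.2 * v.2) ^ 2)
          - μ * (1 + x.1 ^ 2 + x.2 ^ 2) *
              ((pd1 w x + dotxi w x * x.1) * v.1 + (pd2 w x + dotxi w x * x.2) * v.2) ^ 2

/-!
A function `ψ` on `ℝ²` extends to a `1`-homogeneous function on the half-space
`{(X₁, X₂, X₃) | 0 < X₃}` by `Ψ(X) = X₃ ψ(X₁/X₃, X₂/X₃)`, and `w = ψ/√(1+|ξ|²)` is the restriction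
of `Ψ` to the unit sphere, written in the central projection `ξ`. For this `w` the tensor
`Hess w + w g` of the round metric `g` is `D²ψ/√(1+|ξ|²)`. On the other hand `𝒩_μ w` is a
contraction of `Hess w + w g`, so that `𝒩_μ w = ℱ(μ,ψ)/√(1+|ξ|²)`. For `w = w^η` the function `ψ`
is affine, whence `D²ψ = 0` and `ℱ(μ,ψ) = 0`.
-/

/-- The Euclidean inner product `a · b` on `ℝ × ℝ`, as a continuous linear functional of `b`.
Mathlib equips `ℝ × ℝ` with the sup norm, so `inner` is not available. -/
noncomputable def pairDot (a : ℝ × ℝ) : ℝ × ℝ →L[ℝ] ℝ :=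
  a.1 • ContinuousLinearMap.fst ℝ ℝ ℝ + a.2 • ContinuousLinearMap.snd ℝ ℝ ℝ

lemma pairDot_apply (a b : ℝ × ℝ) : pairDot a b = a.1 * b.1 + a.2 * b.2 := rfl

lemma pairDot_comm (a b : ℝ × ℝ) : pairDot a b = pairDot b a := by
  simp only [pairDot_apply, mul_comm]

section coneNorm

/-- The Euclidean norm `√(1+|ξ|²)` of the point `(ξ, 1)` of `ℝ³` above `ξ`. -/
noncomputable def coneNorm (x : ℝ × ℝ) : ℝ := √(1 + x.1 ^ 2 + x.2 ^ 2)

lemma coneNorm_pos (x : ℝ × ℝ) : 0 < coneNorm x := Real.sqrt_pos.2 (by positivity)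

lemma coneNorm_sq (x : ℝ × ℝ) : coneNorm x ^ 2 = 1 + x.1 ^ 2 + x.2 ^ 2 :=
  Real.sq_sqrt (by positivity)

lemma hasFDerivAt_coneNorm (x : ℝ × ℝ) :
    HasFDerivAt coneNorm ((coneNorm x)⁻¹ • pairDot x) x := by
  have hT : 1 + x.1 ^ 2 + x.2 ^ 2 ≠ 0 := by positivity
  have hfst : HasFDerivAt (Prod.fst : ℝ × ℝ → ℝ) (ContinuousLinearMap.fst ℝ ℝ ℝ) x :=
    hasFDerivAt_fst
  have hsnd : HasFDerivAt (Prod.snd : ℝ × ℝ → ℝ) (ContinuousLinearMap.snd ℝ ℝ ℝ) x :=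
    hasFDerivAt_snd
  have hsq := ((hfst.pow 2).const_add 1).add (hsnd.pow 2)
  refine (hsq.sqrt hT).congr_fderiv ?_
  ext <;> simp [coneNorm, pairDot] <;> ring

lemma differentiableAt_div_coneNorm_pow {ψ : ℝ × ℝ → ℝ} {x : ℝ × ℝ} (hψ : DifferentiableAt ℝ ψ x)
    (n : ℕ) : DifferentiableAt ℝ (fun y => ψ y / coneNorm y ^ n) x := by
  have hpow : DifferentiableAt ℝ (fun y => coneNorm y ^ n) x :=
    (hasFDerivAt_coneNorm x).differentiableAt.fun_pow n
  simpa only [div_eq_mul_inv] using! hψ.mul (hpow.inv (pow_ne_zero n (coneNorm_pos x).ne'))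

lemma fderiv_div_coneNorm_pow_apply {ψ : ℝ × ℝ → ℝ} {x : ℝ × ℝ} (hψ : DifferentiableAt ℝ ψ x)
    (n : ℕ) (v : ℝ × ℝ) :
    fderiv ℝ (fun y => ψ y / coneNorm y ^ n) x v
      = fderiv ℝ ψ x v / coneNorm x ^ n - n * pairDot v x * ψ x / coneNorm x ^ (n + 2) := by
  have hr := (coneNorm_pos x).ne'
  have hinv : HasFDerivAt (fun y => (coneNorm y ^ n)⁻¹) _ x :=
    (hasDerivAt_inv (pow_ne_zero n hr)).comp_hasFDerivAt x ((hasFDerivAt_coneNorm x).pow n)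
  simp only [div_eq_mul_inv]
  rw [fderiv_fun_mul hψ hinv.differentiableAt, hinv.fderiv]
  rcases n with _ | n
  · simp
  · simp [pairDot_comm v x]
    field_simp
    ring

end coneNorm

section sphHess

/-- The tensor `Hess w + w g` of the round metric `g` of the unit sphere in the central projection,
where `g(a,b) = a·b/(1+|ξ|²) - (a·ξ)(b·ξ)/(1+|ξ|²)²` and the first-order terms come from the
Christoffel symbols of `g`. -/
noncomputable def sphHess (w : ℝ × ℝ → ℝ) (a b x : ℝ × ℝ) : ℝ :=
  D2 w a b x
    + (pairDot a x * pairDot b (gradv w x) + pairDot b x * pairDot a (gradv w x)) / coneNorm x ^ 2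
    + w x * (pairDot a b / coneNorm x ^ 2 - pairDot a x * pairDot b x / (coneNorm x ^ 2) ^ 2)

lemma laplacian_eq_D2 (f : ℝ × ℝ → ℝ) (x : ℝ × ℝ) :
    pd1 (pd1 f) x + pd2 (pd2 f) x = D2 f (1, 0) (1, 0) x + D2 f (0, 1) (0, 1) x := by
  simp [D2]

lemma D2_smul_smul (f : ℝ × ℝ → ℝ) (c : ℝ) (a b x : ℝ × ℝ) :
    D2 f (c • a) (c • b) x = c ^ 2 * D2 f a b x := by
  simp only [D2, Prod.smul_fst, Prod.smul_snd, smul_eq_mul]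
  ring

lemma sphHess_trace (w : ℝ × ℝ → ℝ) (x : ℝ × ℝ) :
    sphHess w (1, 0) (1, 0) x + sphHess w (0, 1) (0, 1) x + sphHess w x x x
      = pd1 (pd1 w) x + pd2 (pd2 w) x + D2 w x x x + 2 * dotxi w x
        + 2 * w x / (1 + x.1 ^ 2 + x.2 ^ 2) := by
  have hT : 1 + x.1 ^ 2 + x.2 ^ 2 ≠ 0 := by positivity
  simp only [sphHess, laplacian_eq_D2, pairDot_apply, gradv, dotxi, coneNorm_sq]
  field_simp
  ring

lemma sphHess_grad_grad (w : ℝ × ℝ → ℝ) (x : ℝ × ℝ) :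
    sphHess w (gradv w x + dotxi w x • x) (gradv w x + dotxi w x • x) x
      = D2 w (gradv w x + dotxi w x • x) (gradv w x + dotxi w x • x) x
        + (pd1 w x ^ 2 + pd2 w x ^ 2 + dotxi w x ^ 2)
          * (2 * dotxi w x + w x / (1 + x.1 ^ 2 + x.2 ^ 2)) := by
  have hT : 1 + x.1 ^ 2 + x.2 ^ 2 ≠ 0 := by positivity
  simp only [sphHess, pairDot_apply, gradv, dotxi, coneNorm_sq, Prod.fst_add, Prod.snd_add,
    Prod.smul_fst, Prod.smul_snd, smul_eq_mul]
  field_simp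
  ring

/-- Multiplied by `1+|ξ|²`, the three-term sum is the trace of `Hess w + w g` with respect to the
round metric `g`, and `Dw + (Dw·ξ)ξ` is the `g`-gradient of `w`. -/
lemma Nop_eq_sphHess (μ : ℝ) (w : ℝ × ℝ → ℝ) (x : ℝ × ℝ) :
    Nop μ w x
      = b2 w x * (sphHess w (1, 0) (1, 0) x + sphHess w (0, 1) (0, 1) x + sphHess w x x x)
        - μ * coneNorm x ^ 2
          * sphHess w (gradv w x + dotxi w x • x) (gradv w x + dotxi w x • x) x := by
  have hT : 1 + x.1 ^ 2 + x.2 ^ 2 ≠ 0 := by positivity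
  rw [sphHess_trace, sphHess_grad_grad, coneNorm_sq, Nop, b2]
  field_simp
  ring

end sphHess

section sphereRestrict

/-- The restriction to the unit sphere of the `1`-homogeneous extension of `ψ`, as a function of the
central projection coordinate `ξ`. -/
noncomputable def sphereRestrict (ψ : ℝ × ℝ → ℝ) (x : ℝ × ℝ) : ℝ := ψ x / coneNorm x

variable {ψ : ℝ × ℝ → ℝ} {x : ℝ × ℝ}

lemma differentiableAt_sphereRestrict (hψ : DifferentiableAt ℝ ψ x) :
    DifferentiableAt ℝ (sphereRestrict ψ) x := by
  simpa only [pow_one] using! differentiableAt_div_coneNorm_pow hψ 1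

lemma fderiv_sphereRestrict_apply (hψ : DifferentiableAt ℝ ψ x) (v : ℝ × ℝ) :
    fderiv ℝ (sphereRestrict ψ) x v
      = fderiv ℝ ψ x v / coneNorm x - pairDot v x * ψ x / coneNorm x ^ 3 := by
  simpa only [pow_one, Nat.cast_one, one_mul] using! fderiv_div_coneNorm_pow_apply hψ 1 v

lemma fderiv_fderiv_sphereRestrict_apply (hψ : ContDiffAt ℝ 2 ψ x) (u v : ℝ × ℝ) :
    fderiv ℝ (fun y => fderiv ℝ (sphereRestrict ψ) y v) x u
      = fderiv ℝ (fun y => fderiv ℝ ψ y v) x u / coneNorm x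
        - (pairDot u x * fderiv ℝ ψ x v + pairDot v x * fderiv ℝ ψ x u + pairDot u v * ψ x)
          / coneNorm x ^ 3
        + 3 * pairDot u x * pairDot v x * ψ x / coneNorm x ^ 5 := by
  have hr := (coneNorm_pos x).ne'
  have hψ₁ : DifferentiableAt ℝ ψ x := hψ.differentiableAt two_ne_zero
  have hψ₂ : DifferentiableAt ℝ (fun y => fderiv ℝ ψ y v) x :=
    ((hψ.fderiv_right (m := 1) (by norm_num)).differentiableAt one_ne_zero).clm_apply
      (differentiableAt_const v)
  have hgrad : (fun y => fderiv ℝ (sphereRestrict ψ) y v) =ᶠ[nhds x] fun y =>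
      sphereRestrict (fun z => fderiv ℝ ψ z v) y - pairDot v y * ψ y / coneNorm y ^ 3 :=
    (hψ.eventually (by simp)).mono fun y hy =>
      fderiv_sphereRestrict_apply (hy.differentiableAt two_ne_zero) v
  have hprod : DifferentiableAt ℝ (fun y => pairDot v y * ψ y) x :=
    (pairDot v).differentiableAt.mul hψ₁
  have hdprod : fderiv ℝ (fun y => pairDot v y * ψ y) x u
      = pairDot v x * fderiv ℝ ψ x u + ψ x * pairDot v u := by
    simp [fderiv_fun_mul (pairDot v).differentiableAt hψ₁]
  rw [hgrad.fderiv_eq, fderiv_fun_sub (differentiableAt_sphereRestrict hψ₂)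
    (differentiableAt_div_coneNorm_pow hprod 3), sub_apply, fderiv_sphereRestrict_apply hψ₂,
    fderiv_div_coneNorm_pow_apply hprod, hdprod, pairDot_comm v u]
  field_simp
  ring

lemma sphHess_sphereRestrict (hψ : ContDiffAt ℝ 2 ψ x) (a b : ℝ × ℝ) :
    sphHess (sphereRestrict ψ) a b x = D2 ψ a b x / coneNorm x := by
  have hr := (coneNorm_pos x).ne'
  have hψ' : DifferentiableAt ℝ ψ x := hψ.differentiableAt two_ne_zero
  unfold sphHess D2 gradv pd1 pd2
  simp only [fderiv_fderiv_sphereRestrict_apply hψ, fderiv_sphereRestrict_apply hψ']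
  simp only [pairDot_apply, sphereRestrict]
  field_simp
  ring

lemma pd1_sphereRestrict (hψ : DifferentiableAt ℝ ψ x) :
    pd1 (sphereRestrict ψ) x = pd1 ψ x / coneNorm x - x.1 * ψ x / coneNorm x ^ 3 := by
  simp [pd1, fderiv_sphereRestrict_apply hψ, pairDot_apply]

lemma pd2_sphereRestrict (hψ : DifferentiableAt ℝ ψ x) :
    pd2 (sphereRestrict ψ) x = pd2 ψ x / coneNorm x - x.2 * ψ x / coneNorm x ^ 3 := by
  simp [pd2, fderiv_sphereRestrict_apply hψ, pairDot_apply]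

lemma dotxi_sphereRestrict (hψ : DifferentiableAt ℝ ψ x) :
    dotxi (sphereRestrict ψ) x
      = dotxi ψ x / coneNorm x - (coneNorm x ^ 2 - 1) * ψ x / coneNorm x ^ 3 := by
  rw [dotxi, dotxi, pd1_sphereRestrict hψ, pd2_sphereRestrict hψ]
  linear_combination ψ x / coneNorm x ^ 3 * coneNorm_sq x

lemma b2_sphereRestrict (hψ : DifferentiableAt ℝ ψ x) :
    b2 (sphereRestrict ψ) x = sqSound ψ x := by
  have hr := (coneNorm_pos x).ne'
  rw [b2, ← coneNorm_sq, dotxi_sphereRestrict hψ, pd1_sphereRestrict hψ, pd2_sphereRestrict hψ,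
    sqSound, chiF, sphereRestrict, dotxi]
  linear_combination (norm := (field_simp; ring)) -(ψ x ^ 2 / coneNorm x ^ 4) * coneNorm_sq x

lemma gradv_add_dotxi_smul_sphereRestrict (hψ : DifferentiableAt ℝ ψ x) :
    gradv (sphereRestrict ψ) x + dotxi (sphereRestrict ψ) x • x
      = (coneNorm x)⁻¹ • (gradv ψ x - chiF ψ x • x) := by
  have hr := (coneNorm_pos x).ne'
  rw [gradv, pd1_sphereRestrict hψ, pd2_sphereRestrict hψ, dotxi_sphereRestrict hψ]
  ext <;> simp [gradv, chiF] <;> field_simp <;> ring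

theorem Nop_sphereRestrict (hψ : ContDiffAt ℝ 2 ψ x) (μ : ℝ) :
    Nop μ (sphereRestrict ψ) x = Fop μ ψ x / coneNorm x := by
  have hr := (coneNorm_pos x).ne'
  have hψ' : DifferentiableAt ℝ ψ x := hψ.differentiableAt two_ne_zero
  rw [Nop_eq_sphHess, b2_sphereRestrict hψ', gradv_add_dotxi_smul_sphereRestrict hψ']
  simp only [sphHess_sphereRestrict hψ, D2_smul_smul]
  rw [Fop, laplacian_eq_D2]
  field_simp

end sphereRestrict

section affine

lemma D2_affine (v : ℝ × ℝ) (c : ℝ) (a b x : ℝ × ℝ) :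
    D2 (fun y => pairDot v y + c) a b x = 0 := by
  unfold D2 pd1 pd2
  simp

lemma Fop_affine (μ : ℝ) (v : ℝ × ℝ) (c : ℝ) (x : ℝ × ℝ) :
    Fop μ (fun y => pairDot v y + c) x = 0 := by
  simp only [Fop, laplacian_eq_D2, D2_affine, add_zero, mul_zero, sub_zero]

end affine

theorem weta_solves_Nop_general (η1 η2 η3 μ : ℝ) (ξ : ℝ × ℝ) :
    Nop μ (fun x : ℝ × ℝ =>
      (η1 * x.1 + η2 * x.2 + η3) / Real.sqrt (1 + x.1 ^ 2 + x.2 ^ 2)) ξ = 0 := by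
  have hψ : ContDiffAt ℝ 2 (fun x => pairDot (η1, η2) x + η3) ξ := by fun_prop
  calc Nop μ (sphereRestrict fun x => pairDot (η1, η2) x + η3) ξ
      = Fop μ (fun x => pairDot (η1, η2) x + η3) ξ / coneNorm ξ := Nop_sphereRestrict hψ μ
    _ = 0 := by rw [Fop_affine, zero_div]

/-- For every constant vector `η = (η₁,η₂,η₃) ∈ ℝ³` and every `μ ∈ [0,1]`, the
function `w^η(ξ) = (η₁ξ₁ + η₂ξ₂ + η₃)/√(1+|ξ|²)` is an exact global solution of
`𝒩_μ w = 0`. -/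
theorem weta_solves_Nop (η1 η2 η3 μ : ℝ) (hμ0 : 0 ≤ μ) (hμ1 : μ ≤ 1) :
    ∀ ξ : ℝ × ℝ,
      Nop μ (fun x : ℝ × ℝ =>
        (η1 * x.1 + η2 * x.2 + η3) / Real.sqrt (1 + x.1 ^ 2 + x.2 ^ 2)) ξ = 0 :=
  weta_solves_Nop_general η1 η2 η3 μ
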